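/- Let d ≥ 3 and ε ∈ (0,1), and let B = B(0,N^{1−ε/2}) ⊂ T. There is a constant c = c(d,ε) > 0 such that for all sufficiently large N: inf_{x ∈ T∖B} σ(x) ≥ c N^{−2d}, where σ is the quasistationary distribution on T∖B. -/

import Mathlib

open MeasureTheory Filter Classical
open scoped ENNReal NNReal

noncomputable section

namespace Frag

/-! ### Graph-theoretic basics -/

/-- Two vertices of `Fin d → R` are adjacent if they differ in exactly one
coordinate, by `±1` (Euclidean distance one). -/
def adj {d : ℕ} {R : Type*} [AddGroupWithOne R] (x y : Fin d → R) : Prop :=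
  x ≠ y ∧ ∃ i : Fin d, (y i = x i + 1 ∨ x i = y i + 1) ∧ ∀ j : Fin d, j ≠ i → x j = y j

/-- The discrete torus `(ℤ/Nℤ)^d`. -/
abbrev Torus (d N : ℕ) := Fin d → ZMod N

/-- The lattice `ℤ^d`. -/
abbrev Lat (d : ℕ) := Fin d → ℤ

instance (n : ℕ) : MeasurableSpace (ZMod n) := ⊤

/-- The `ℓ∞`-distance on the torus. -/
def torusDist {d N : ℕ} (x y : Torus d N) : ℕ :=
  Finset.univ.sup fun i : Fin d => min (x i - y i).val (y i - x i).val

/-- The `ℓ∞`-distance on the lattice. -/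
def latDist {d : ℕ} (x y : Lat d) : ℕ :=
  Finset.univ.sup fun i : Fin d => (x i - y i).natAbs

/-- Closed `ℓ∞`-ball in the torus. -/
def torusBall {d N : ℕ} (x : Torus d N) (r : ℝ) : Set (Torus d N) :=
  {y | (torusDist x y : ℝ) ≤ r}

/-- Closed `ℓ∞`-ball in the lattice. -/
def latBall {d : ℕ} (x : Lat d) (r : ℝ) : Set (Lat d) :=
  {y | (latDist x y : ℝ) ≤ r}

/-- `x` and `y` are connected by a nearest-neighbour path staying in `S`. -/
def connectedIn {α : Type*} (rel : α → α → Prop) (S : Set α) (x y : α) : Prop :=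
  ∃ (n : ℕ) (p : ℕ → α), p 0 = x ∧ p n = y ∧ (∀ k, k ≤ n → p k ∈ S) ∧
    ∀ k, k < n → rel (p k) (p (k + 1))

/-- The connected component of `x` inside `S`. -/
def compOf {α : Type*} (rel : α → α → Prop) (S : Set α) (x : α) : Set α :=
  {y | connectedIn rel S x y}

/-- `S` is a connected set. -/
def IsConnSet {α : Type*} (rel : α → α → Prop) (S : Set α) : Prop :=
  ∀ x ∈ S, ∀ y ∈ S, connectedIn rel S x y

/-- External vertex boundary. -/
def extBdry {α : Type*} (rel : α → α → Prop) (S : Set α) : Set α :=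
  {y | y ∉ S ∧ ∃ x ∈ S, rel x y}

/-- Internal vertex boundary. -/
def intBdry {α : Type*} (rel : α → α → Prop) (S : Set α) : Set α :=
  {x | x ∈ S ∧ ∃ y, y ∉ S ∧ rel x y}

/-- The cardinality of the largest connected component of `S`. -/
def maxCompSize {α : Type*} (rel : α → α → Prop) (S : Set α) : ℕ :=
  sSup {n | ∃ x ∈ S, n = (compOf rel S x).ncard}

/-- The diameter of a set with respect to a distance. -/
def diamOf {α : Type*} (dist : α → α → ℕ) (S : Set α) : ℕ :=
  sSup {n | ∃ x ∈ S, ∃ y ∈ S, n = dist x y}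

/-- The canonical graph isomorphism `φ` from `B(0, N/4) ⊆ (ℤ/Nℤ)^d` onto
`B(0, N/4) ⊆ ℤ^d`, given by the signed representative of each coordinate. -/
def torusToLat {d N : ℕ} (x : Torus d N) : Lat d :=
  fun i => if ((x i).val : ℝ) ≤ (N : ℝ) / 2 then ((x i).val : ℤ) else ((x i).val : ℤ) - (N : ℤ)

/-! ### Discrete-time simple random walk -/

/-- One-step transition probability of the simple random walk. -/
def srwStep {d : ℕ} {R : Type*} [AddGroupWithOne R] (x y : Fin d → R) : ℝ≥0∞ :=
  if adj x y then ((2 * d : ℕ) : ℝ≥0∞)⁻¹ else 0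

/-- `μ` is the law on path space of the discrete-time simple random walk with
initial distribution `init`, characterized by its cylinder probabilities. -/
def IsWalkLaw {d : ℕ} {R : Type*} [AddGroupWithOne R] [MeasurableSpace R]
    (μ : Measure (ℕ → (Fin d → R))) (init : (Fin d → R) → ℝ≥0∞) : Prop :=
  IsProbabilityMeasure μ ∧
  ∀ (n : ℕ) (w : ℕ → (Fin d → R)),
    μ {ω | ∀ k, k ≤ n → ω k = w k} =
      init (w 0) * ∏ k ∈ Finset.range n, srwStep (w k) (w (k + 1))

/-- The uniform initial distribution on the torus. -/
def unifInit (d N : ℕ) : Torus d N → ℝ≥0∞ := fun _ => ((N : ℝ≥0∞) ^ d)⁻¹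

/-- The initial distribution concentrated at `x`. -/
def pointInit {α : Type*} (x : α) : α → ℝ≥0∞ := fun y => if y = x then 1 else 0

/-- The set of sites visited in the first `t` steps. -/
def visited {α : Type*} (t : ℕ) (ω : ℕ → α) : Set α := {v | ∃ k, k ≤ t ∧ ω k = v}

/-! ### Capacity and random interlacements on `ℤ^d` -/

/-- The event that the walk never returns to `V` after time `0`. -/
def escEvent {d : ℕ} (V : Set (Lat d)) : Set (ℕ → Lat d) :=
  {w | ∀ n, 1 ≤ n → w n ∉ V}

/-- `r` is the (simple random walk) capacity of `V ⊆ ℤ^d`: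
`r = Σ_{x ∈ V} P_x[H̃_V = ∞]`. -/
def IsCap (d : ℕ) (V : Set (Lat d)) (r : ℝ) : Prop :=
  ∃ μ : Lat d → Measure (ℕ → Lat d),
    (∀ x, IsWalkLaw (μ x) (pointInit x)) ∧
    r = ∑ᶠ x ∈ V, ((μ x) (escEvent V)).toReal

/-- `I` is a random interlacement at level `u` on the probability space `(Ω, P)`:
for every finite `V ⊆ ℤ^d`, `P[I ∩ V = ∅] = exp (−u · cap V)`. -/
def IsInterlacement (d : ℕ) (u : ℝ) {Ω : Type*} [MeasurableSpace Ω]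
    (P : Measure Ω) (I : Ω → Set (Lat d)) : Prop :=
  IsProbabilityMeasure P ∧
  (∀ x : Lat d, MeasurableSet {ω | x ∈ I ω}) ∧
  ∀ V : Set (Lat d), V.Finite → ∀ r : ℝ, IsCap d V r →
    P {ω | ∀ x ∈ V, x ∉ I ω} = ENNReal.ofReal (Real.exp (-u * r))

/-- `e = η(u)`, the probability that the origin lies in an infinite component of
the vacant set `V^u = ℤ^d ∖ I^u` of a random interlacement at level `u`. -/
def IsEta (d : ℕ) (u e : ℝ) : Prop :=
  ∃ (Ω : Type) (_ : MeasurableSpace Ω) (P : Measure Ω) (I : Ω → Set (Lat d)),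
    IsInterlacement d u P I ∧
    e = (P {ω | (compOf adj ((I ω)ᶜ) (0 : Lat d)).Infinite}).toReal

/-- The critical level `u_* = inf {u ≥ 0 : η(u) = 0}`. -/
def uStar (d : ℕ) : ℝ := sInf {u | 0 ≤ u ∧ IsEta d u 0}

/-- The probability of an event `E` about a random interlacement at level `u`. -/
def intProb (d : ℕ) (u : ℝ) (E : Set (Lat d) → Prop) : ℝ :=
  sSup {p | ∃ (Ω : Type) (_ : MeasurableSpace Ω) (P : Measure Ω) (I : Ω → Set (Lat d)),
    IsInterlacement d u P I ∧ p = (P {ω | E (I ω)}).toReal}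

/-- The event that `B(0,L)` is connected to the external boundary of `B(0,2L)`
by a nearest-neighbour path in `S`. -/
def connAcross (d L : ℕ) (S : Set (Lat d)) : Prop :=
  ∃ x ∈ latBall (0 : Lat d) (L : ℝ), ∃ y ∈ extBdry adj (latBall (0 : Lat d) (2 * (L : ℝ))),
    connectedIn adj S x y

/-- The critical level `u_** = inf {u ≥ 0 : α(u) > 0}`. -/
def uStarStar (d : ℕ) : ℝ :=
  sInf {u | 0 ≤ u ∧ ∃ a : ℝ, 0 < a ∧
    Tendsto (fun L : ℕ => (L : ℝ) ^ a * intProb d u fun I => connAcross d L Iᶜ)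
      atTop (nhds 0)}

/-- `u` is a strongly supercritical level for random interlacements on `ℤ^d`. -/
def StronglySupercritical (d : ℕ) (u : ℝ) : Prop :=
  ∃ μ : ℝ, 0 < μ ∧
  ∃ (Ω : Type) (_ : MeasurableSpace Ω) (P : Measure Ω) (I : ℝ → Ω → Set (Lat d)),
    (∀ v : ℝ, 0 ≤ v → IsInterlacement d v P (I v)) ∧
    (∀ v v' : ℝ, v ≤ v' → ∀ ω, I v ω ⊆ I v' ω) ∧
    ∃ N₀ : ℕ, ∀ N : ℕ, N₀ ≤ N →
      (1 - Real.exp (-(N : ℝ) ^ μ) ≤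
        (P {ω | ∃ x ∈ latBall (0 : Lat d) (N : ℝ),
          (compOf adj ((I (u * (1 + μ)) ω)ᶜ) x).Infinite}).toReal) ∧
      (1 - Real.exp (-(N : ℝ) ^ μ) ≤
        (P {ω | ∀ S₁ S₂ : Set (Lat d),
            S₁ ⊆ (I (u * (1 - μ)) ω)ᶜ ∩ latBall 0 (N : ℝ) →
            S₂ ⊆ (I (u * (1 - μ)) ω)ᶜ ∩ latBall 0 (N : ℝ) →
            IsConnSet adj S₁ → IsConnSet adj S₂ →
            (N : ℝ) / 8 ≤ (diamOf latDist S₁ : ℝ) →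
            (N : ℝ) / 8 ≤ (diamOf latDist S₂ : ℝ) →
            ∃ x ∈ S₁, ∃ y ∈ S₂,
              connectedIn adj ((I (u * (1 + μ)) ω)ᶜ ∩ latBall 0 (2 * (N : ℝ))) x y}).toReal)

/-! ### Continuous-time walk -/

/-- Sample space for the continuous-time walk: a discrete path together with
the i.i.d. exponential interarrival gaps of the driving Poisson process. -/
abbrev CTPath (d N : ℕ) := (ℕ → Torus d N) × (ℕ → ℝ)

/-- The number of jumps performed up to time `t`. -/
def nJumps (g : ℕ → ℝ) (t : ℝ) : ℕ := sSup {n | ∑ k ∈ Finset.range n, g k ≤ t}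

/-- The position of the continuous-time walk at time `t`. -/
def ctPos {d N : ℕ} (ω : CTPath d N) (t : ℝ) : Torus d N := ω.1 (nJumps ω.2 t)

/-- `ν` is the law of an i.i.d. sequence of exponential random variables of
parameter `1`, characterized by its joint survival function. -/
def IsIIDExp (ν : Measure (ℕ → ℝ)) : Prop :=
  IsProbabilityMeasure ν ∧
  ∀ (n : ℕ) (s : ℕ → ℝ), (∀ k, 0 ≤ s k) →
    ν {g | ∀ k, k ≤ n → s k < g k} =
      ENNReal.ofReal (Real.exp (-(∑ k ∈ Finset.range (n + 1), s k)))

/-- `P` is the law of the continuous-time simple random walk `Y_t = X_{N_t}`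
with initial distribution `init`. -/
def IsCTWalk {d N : ℕ} (P : Measure (CTPath d N)) (init : Torus d N → ℝ≥0∞) : Prop :=
  ∃ (μ : Measure (ℕ → Torus d N)) (ν : Measure (ℕ → ℝ)),
    IsWalkLaw μ init ∧ IsIIDExp ν ∧ P = μ.prod ν

/-- The entrance time `H_V = inf {t ≥ 0 : Y_t ∈ V}`. -/
def hitT {d N : ℕ} (V : Set (Torus d N)) (ω : CTPath d N) : ℝ :=
  sInf {t | 0 ≤ t ∧ ctPos ω t ∈ V}

/-- The entrance time to `V` after time `s`. -/
def hitTAfter {d N : ℕ} (V : Set (Torus d N)) (ω : CTPath d N) (s : ℝ) : ℝ :=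
  sInf {t | s ≤ t ∧ ctPos ω t ∈ V}

/-- The exit time `T_V = inf {t ≥ 0 : Y_t ∉ V}`. -/
def exitT {d N : ℕ} (V : Set (Torus d N)) (ω : CTPath d N) : ℝ :=
  sInf {t | 0 ≤ t ∧ ctPos ω t ∉ V}

/-- The regeneration time `t_* = (N log N)^2`. -/
def tstar (N : ℕ) : ℝ := ((N : ℝ) * Real.log N) ^ 2

/-- The first time `t ≥ s + t_*` such that the walk has avoided `B` during the
whole interval `[t − t_*, t]`. -/
def uEndAfter {d N : ℕ} (B : Set (Torus d N)) (ω : CTPath d N) (s : ℝ) : ℝ :=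
  sInf {t | s + tstar N ≤ t ∧ ∀ r, t - tstar N ≤ r → r ≤ t → ctPos ω r ∉ B}

/-- The successive excursion times `(R_k, U_k)` between `A` and (long absences
from) `B`, with the convention `(R_0, U_0) = (0, 0)`. -/
def excTimes {d N : ℕ} (A B : Set (Torus d N)) (ω : CTPath d N) : ℕ → ℝ × ℝ
  | 0 => (0, 0)
  | k + 1 =>
      let R := hitTAfter A ω (excTimes A B ω k).2
      (R, uEndAfter B ω R)

/-- The range of the continuous-time walk during the time interval `[a, b]`. -/
def ctRange {d N : ℕ} (ω : CTPath d N) (a b : ℝ) : Set (Torus d N) :=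
  {v | ∃ t, a ≤ t ∧ t ≤ b ∧ ctPos ω t = v}

/-! ### The killed walk and the quasistationary distribution -/

/-- The action of the substochastic matrix `P^B` (walk killed on `B`) on a
vector `v`. -/
def killedMul (d N : ℕ) (B : Set (Torus d N)) (v : Torus d N → ℝ) (x : Torus d N) : ℝ :=
  ∑ᶠ y : Torus d N, if y ∉ B ∧ adj x y then v y / (2 * d) else 0

/-- `l` is an eigenvalue of the killed transition matrix `P^B`. -/
def IsKilledEigenvalue (d N : ℕ) (B : Set (Torus d N)) (l : ℝ) : Prop :=
  ∃ v : Torus d N → ℝ, v ≠ 0 ∧ (∀ x ∈ B, v x = 0) ∧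
    ∀ x, x ∉ B → killedMul d N B v x = l * v x

/-- `σ` is the quasistationary distribution on `T ∖ B`: the normalized
non-negative principal (Perron–Frobenius) eigenvector of `P^B`. -/
def IsQSD (d N : ℕ) (B : Set (Torus d N)) (σ : Torus d N → ℝ) : Prop :=
  (∀ x, 0 ≤ σ x) ∧ (∀ x ∈ B, σ x = 0) ∧ (∑ᶠ x, σ x = 1) ∧
  ∃ l : ℝ, (∀ x, x ∉ B → killedMul d N B σ x = l * σ x) ∧
    ∀ l', IsKilledEigenvalue d N B l' → l' ≤ l

/-- The Dirichlet form of the simple random walk on the torus. -/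
def dirichlet (d N : ℕ) (g : Torus d N → ℝ) : ℝ :=
  (1 / 2) * ∑ᶠ x : Torus d N, ∑ᶠ y : Torus d N,
    if adj x y then (g x - g y) ^ 2 / (2 * d * (N : ℝ) ^ d) else 0

end Frag

namespace Frag

/-!
The quasistationary distribution `σ` is superharmonic off the ball, hence on each slab of points
whose `j`-th coordinate is at distance more than `a = ⌊r⌋₊` from `0`; these slabs cover the
complement of the ball.

On a slab, `σ` is bounded below by a function of the `j`-th coordinate alone, obtained by minimising
over the other coordinates one at a time. Minimising preserves superharmonicity. The mass of `σ`,
weighted by a truncated cosine in `x j`, drops only by a constant factor each time: after `N ^ 2`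
steps of a lazy walk along a column of length `N` the minimum over the column is comparable to the
average, and each step raises the weighted minimum by a factor at most `1 + O(N⁻²)`, since by
superharmonicity the gain is at most minus the Laplacian of the minimum, which after summation by
parts falls on an approximate eigenfunction with eigenvalue of order `N⁻²`. What remains is a
concave function on an interval, which has a linear lower bound.

This makes `σ` of order `N ^ (-d)` times the weighted mass in the middle half of the slab. Any two
such middle halves overlap, so the weighted masses of all slabs are comparable; since the sums of
`σ` over hyperplanes are concave as well, all of them are of order one.
-/

section SecondDiff

variable {G : Type*}

/-- The (unnormalised) second difference of `f` at `x` in the direction `e`. -/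
def secondDiff [AddGroup G] (e : G) (f : G → ℝ) (x : G) : ℝ :=
  f (x + e) + f (x - e) - 2 * f x

/-- One step of the lazy random walk along the line through `x` with direction `e`, which stays put
with probability `1 / 2`. -/
def lazyStep [AddGroup G] (e : G) (f : G → ℝ) (x : G) : ℝ :=
  f x + secondDiff e f x / 4

lemma lazyStep_eq [AddGroup G] (e : G) (f : G → ℝ) (x : G) :
    lazyStep e f x = f (x + e) / 4 + f (x - e) / 4 + f x / 2 := by
  rw [lazyStep, secondDiff]
  ring

lemma lazyStep_nonneg [AddGroup G] (e : G) {f : G → ℝ} (hf : ∀ x, 0 ≤ f x) (x : G) :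
    0 ≤ lazyStep e f x := by
  rw [lazyStep_eq]
  linarith [hf (x + e), hf (x - e), hf x]

lemma secondDiff_comp_neg [AddCommGroup G] (e : G) (f : G → ℝ) (x : G) :
    secondDiff e (fun y => f (-y)) x = secondDiff e f (-x) := by
  simp only [secondDiff, neg_add, sub_eq_add_neg, neg_neg]
  ring

lemma secondDiff_lazyStep [AddCommGroup G] (e e' : G) (f : G → ℝ) (x : G) :
    secondDiff e (lazyStep e' f) x = lazyStep e' (secondDiff e f) x := by
  simp only [secondDiff, lazyStep, sub_eq_add_neg, add_right_comm]
  ring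

lemma sum_mul_secondDiff [AddCommGroup G] [Fintype G] (e : G) (f g : G → ℝ) :
    ∑ x, f x * secondDiff e g x = ∑ x, secondDiff e f x * g x := by
  have h_add : ∑ x, f x * g (x + e) = ∑ x, f (x - e) * g x := by
    simpa using Equiv.sum_comp (Equiv.addRight e) fun x => f (x - e) * g x
  have h_sub : ∑ x, f x * g (x - e) = ∑ x, f (x + e) * g x := by
    simpa using (Equiv.sum_comp (Equiv.addRight e) fun x => f x * g (x - e)).symm
  simp only [secondDiff, mul_add, mul_sub, add_mul, sub_mul, Finset.sum_add_distrib,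
    Finset.sum_sub_distrib, h_add, h_sub, mul_left_comm, mul_assoc]
  ring

end SecondDiff

section Laplacian

variable {d N : ℕ}

/-- The unnormalised Laplacian of the graph `Torus d N`, with sign convention such that
superharmonic functions have nonpositive Laplacian. -/
def laplacian (f : Torus d N → ℝ) (x : Torus d N) : ℝ :=
  ∑ i, secondDiff (Pi.single i 1) f x

lemma laplacian_lazyStep (e : Torus d N) (f : Torus d N → ℝ) (x : Torus d N) :
    laplacian (lazyStep e f) x = lazyStep e (laplacian f) x := by
  simp only [laplacian, secondDiff_lazyStep, lazyStep_eq, Finset.sum_add_distrib, Finset.sum_div]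

lemma sum_mul_laplacian [NeZero N] (f g : Torus d N → ℝ) :
    ∑ x, f x * laplacian g x = ∑ x, laplacian f x * g x := by
  simp only [laplacian, Finset.mul_sum, Finset.sum_mul]
  rw [Finset.sum_comm, Finset.sum_comm (s := Finset.univ (α := Torus d N))]
  exact Finset.sum_congr rfl fun i _ => sum_mul_secondDiff _ _ _

lemma laplacian_comp_eval (φ : ZMod N → ℝ) (i : Fin d) (x : Torus d N) :
    laplacian (fun y => φ (y i)) x = secondDiff 1 φ (x i) := by
  rw [laplacian, Finset.sum_eq_single_of_mem i (Finset.mem_univ i)]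
  · simp [secondDiff]
  · intro j _ hj
    simp [secondDiff, Pi.single_eq_of_ne hj.symm]
    ring

lemma laplacian_nonpos_of_forall_le {f : Torus d N → ℝ} {x : Torus d N} (hx : ∀ y, f y ≤ f x) :
    laplacian f x ≤ 0 := by
  refine Finset.sum_nonpos fun i _ => ?_
  rw [secondDiff]
  linarith [hx (x + Pi.single i 1), hx (x - Pi.single i 1)]

end Laplacian

section Slab

variable {N : ℕ}

/-- The distance from `t` to `0` on the cycle, minus `a`.  The slabs
`{x | 0 < slabDepth a (x j)}` cover the complement of the `ℓ∞`-ball of radius `a` around `0`. -/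
def slabDepth (a : ℕ) (t : ZMod N) : ℤ :=
  min (t.val - a) (N - a - t.val)

lemma slabDepth_neg [NeZero N] (a : ℕ) (t : ZMod N) : slabDepth a (-t) = slabDepth a t := by
  have := ZMod.val_lt t
  rw [slabDepth, slabDepth, ZMod.neg_val]
  split_ifs with h
  · simp [h]
  · omega

lemma mul_le_mul_of_concave_seq {g : ℕ → ℝ} {w : ℕ} (h_zero : 0 ≤ g 0)
    (h_concave : ∀ s, s + 2 ≤ w → g s + g (s + 2) ≤ 2 * g (s + 1)) {s s' : ℕ} (hs : s ≤ s')
    (hw : s' ≤ w) : s * g s' ≤ s' * g s := by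
  have h_succ : ∀ s : ℕ, s + 1 ≤ w → s * g (s + 1) ≤ (s + 1) * g s := by
    intro s
    induction s with
    | zero => exact fun _ => by simpa using h_zero
    | succ s ih =>
      intro hsw
      have := mul_le_mul_of_nonneg_left (h_concave s hsw) (by positivity : (0 : ℝ) ≤ s + 1)
      push_cast
      linarith [ih (by omega)]
  induction s', hs using Nat.le_induction with
  | base => exact le_rfl
  | succ n hn ih =>
    rcases n.eq_zero_or_pos with rfl | hn_pos
    · obtain rfl : s = 0 := by omega
      simpa using h_zero
    · have hn_pos : (0 : ℝ) < n := by exact_mod_cast hn_pos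
      refine le_of_mul_le_mul_left ?_ hn_pos
      calc n * (s * g (n + 1)) = s * (n * g (n + 1)) := by ring
        _ ≤ s * ((n + 1) * g n) := mul_le_mul_of_nonneg_left (h_succ n hw) s.cast_nonneg
        _ = (n + 1) * (s * g n) := by ring
        _ ≤ (n + 1) * (n * g s) := mul_le_mul_of_nonneg_left (ih (by omega)) (by positivity)
        _ = n * ((n + 1 : ℕ) * g s) := by push_cast; ring

variable [NeZero N] {a : ℕ}

lemma slabDepth_mul_le_of_val_le {m : ZMod N → ℝ} (h_nonneg : ∀ t, 0 ≤ m t)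
    (h_super : ∀ t, 0 < slabDepth a t → secondDiff 1 m t ≤ 0) {t t' : ZMod N}
    (ht : 0 < slabDepth a t) (ht' : 0 < slabDepth a t') (h_le : t.val ≤ t'.val) :
    slabDepth a t * m t' ≤ N * m t := by
  simp only [slabDepth, lt_min_iff] at ht ht'
  have h_concave (s : ℕ) (hs : s + 2 ≤ N - 2 * a) :
      m (a + s : ℕ) + m (a + (s + 2) : ℕ) ≤ 2 * m (a + (s + 1) : ℕ) := by
    have h_val : ((a + (s + 1) : ℕ) : ZMod N).val = a + (s + 1) :=
      ZMod.val_cast_of_lt (by omega)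
    have := h_super (a + (s + 1) : ℕ) (by rw [slabDepth, h_val]; omega)
    simp only [secondDiff] at this
    push_cast at this ⊢
    ring_nf at this ⊢
    linarith
  have h_val (u : ZMod N) (hu : (0 : ℤ) < u.val - a) : ((a + (u.val - a) : ℕ) : ZMod N) = u := by
    rw [Nat.add_sub_cancel' (by omega), ZMod.natCast_zmod_val]
  have key := mul_le_mul_of_concave_seq (g := fun s => m (a + s : ℕ)) (h_nonneg _) h_concave
    (s := t.val - a) (s' := t'.val - a) (by omega) (by omega)
  simp only [h_val t ht.1, h_val t' ht'.1] at key
  have h_depth : (slabDepth a t : ℝ) ≤ (t.val - a : ℕ) := by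
    rw [← Int.cast_natCast (R := ℝ), Int.cast_le, slabDepth]
    omega
  have h_width : ((t'.val - a : ℕ) : ℝ) ≤ N := by
    exact_mod_cast (Nat.sub_le _ _).trans (ZMod.val_lt t').le
  calc slabDepth a t * m t' ≤ (t.val - a : ℕ) * m t' := by gcongr; exact h_nonneg t'
    _ ≤ (t'.val - a : ℕ) * m t := key
    _ ≤ N * m t := by gcongr; exact h_nonneg t

lemma slabDepth_mul_le {m : ZMod N → ℝ} (h_nonneg : ∀ t, 0 ≤ m t)
    (h_super : ∀ t, 0 < slabDepth a t → secondDiff 1 m t ≤ 0) {t t' : ZMod N}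
    (ht : 0 < slabDepth a t) (ht' : 0 < slabDepth a t') :
    slabDepth a t * m t' ≤ N * m t := by
  rcases le_total t.val t'.val with h_le | h_le
  · exact slabDepth_mul_le_of_val_le h_nonneg h_super ht ht' h_le
  · have h_ne (u : ZMod N) (hu : 0 < slabDepth a u) : u ≠ 0 := by
      rintro rfl
      simp [slabDepth] at hu
      omega
    have h_le_neg : (-t).val ≤ (-t').val := by
      rw [ZMod.neg_val, ZMod.neg_val, if_neg (h_ne t ht), if_neg (h_ne t' ht')]
      omega
    have := slabDepth_mul_le_of_val_le (m := fun u => m (-u)) (fun u => h_nonneg (-u))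
      (fun u hu => by
        rw [secondDiff_comp_neg]
        exact h_super (-u) (by rwa [slabDepth_neg]))
      (t := -t) (t' := -t') (by rwa [slabDepth_neg]) (by rwa [slabDepth_neg]) h_le_neg
    simpa [slabDepth_neg] using this

lemma slabDepth_pos_iff {t : ZMod N} :
    0 < slabDepth a t ↔ a < t.val ∧ a < (-t).val := by
  have := ZMod.val_lt t
  rw [slabDepth, lt_min_iff, ZMod.neg_val]
  split_ifs with h
  · simp [h]
  · omega

lemma notMem_torusBall_zero_iff {d : ℕ} {r : ℝ} (hr : 0 ≤ r) {x : Torus d N} :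
    x ∉ torusBall 0 r ↔ ∃ i, 0 < slabDepth ⌊r⌋₊ (x i) := by
  rw [torusBall, Set.mem_ofPred_eq, not_le, ← Nat.floor_lt hr, torusDist, Finset.lt_sup_iff]
  simp [slabDepth_pos_iff, and_comm]

end Slab

section Cycle

variable {N : ℕ} [NeZero N]

/-- The cosine `t ↦ cos (2πt / N)` on the cycle. -/
def zcos (t : ZMod N) : ℝ := (ZMod.stdAddChar t).re

lemma zcos_intCast (j : ℤ) : zcos (j : ZMod N) = Real.cos (2 * Real.pi * j / N) := by
  rw [zcos, ZMod.stdAddChar_coe, ← Complex.exp_ofReal_mul_I_re]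
  push_cast
  ring_nf

lemma zcos_eq_cos_val (t : ZMod N) : zcos t = Real.cos (2 * Real.pi * t.val / N) := by
  simpa using zcos_intCast (N := N) t.val

lemma zcos_zero : zcos (0 : ZMod N) = 1 := by simp [zcos]

lemma zcos_neg (t : ZMod N) : zcos (-t) = zcos t := by
  simp [zcos, AddChar.map_neg_eq_conj]

lemma abs_zcos_le_one (t : ZMod N) : |zcos t| ≤ 1 := by
  rw [zcos_eq_cos_val]
  exact Real.abs_cos_le_one _

lemma zcos_add_add_zcos_sub (s t : ZMod N) :
    zcos (s + t) + zcos (s - t) = 2 * (zcos s * zcos t) := by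
  simp only [zcos, sub_eq_add_neg, AddChar.map_add_eq_mul, AddChar.map_neg_eq_conj,
    Complex.mul_re, Complex.conj_re, Complex.conj_im]
  ring

lemma zcos_sq (t : ZMod N) : zcos t ^ 2 = (1 + zcos (2 * t)) / 2 := by
  have := zcos_add_add_zcos_sub t t
  rw [sub_self, zcos_zero, ← two_mul] at this
  linarith

lemma sum_zcos_mul (r : ZMod N) : ∑ k, zcos (k * r) = if r = 0 then (N : ℝ) else 0 := by
  have := congrArg Complex.re (AddChar.sum_mulShift r (ZMod.isPrimitive_stdAddChar N))
  rw [Complex.re_sum, ZMod.card] at this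
  split_ifs at this ⊢ <;> simpa [zcos] using this

lemma zcos_le_one_sub_sq (t : ZMod N) :
    zcos t ≤ 1 - 8 * ((min t.val (-t).val : ℕ) / N : ℝ) ^ 2 := by
  wlog h : t.val ≤ (-t).val generalizing t
  · have := this (-t) (by rw [neg_neg]; omega)
    rwa [zcos_neg, neg_neg, min_comm] at this
  have hN : (0 : ℝ) < N := by exact_mod_cast NeZero.pos N
  have h_half : (t.val : ℝ) ≤ N / 2 := by
    have := ZMod.val_lt t
    rw [ZMod.neg_val] at h
    rw [le_div_iff₀ two_pos]
    norm_cast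
    split_ifs at h with h_zero
    · simp [h_zero]
    · omega
  have h_angle : |2 * Real.pi * t.val / N| ≤ Real.pi := by
    rw [abs_of_nonneg (by positivity), div_le_iff₀ hN]
    linarith [mul_le_mul_of_nonneg_left h_half Real.pi_pos.le]
  rw [zcos_eq_cos_val, min_eq_left h]
  refine (Real.cos_le_one_sub_mul_cos_sq h_angle).trans_eq ?_
  field_simp
  ring

/-- The eigenvalue of `lazyStep 1` on the character of frequency `k`. -/
def lazyEigenvalue (k : ZMod N) : ℝ := (1 + zcos k) / 2

lemma lazyEigenvalue_zero : lazyEigenvalue (0 : ZMod N) = 1 := by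
  norm_num [lazyEigenvalue, zcos_zero]

lemma lazyEigenvalue_nonneg (k : ZMod N) : 0 ≤ lazyEigenvalue k := by
  have := (abs_le.mp (abs_zcos_le_one k)).1
  rw [lazyEigenvalue]
  linarith

lemma lazyStep_zcos (k s r : ZMod N) :
    lazyStep 1 (fun u => zcos (k * (u - s))) r = lazyEigenvalue k * zcos (k * (r - s)) := by
  have := zcos_add_add_zcos_sub (k * (r - s)) k
  rw [lazyStep_eq, lazyEigenvalue, show k * (r + 1 - s) = k * (r - s) + k by ring,
    show k * (r - 1 - s) = k * (r - s) - k by ring]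
  linarith

lemma lazyStep_iterate_eq_sum (n : ℕ) (f : ZMod N → ℝ) (r : ZMod N) :
    (lazyStep 1)^[n] f r =
      (∑ s, (∑ k, lazyEigenvalue k ^ n * zcos (k * (r - s))) * f s) / N := by
  have hN : (N : ℝ) ≠ 0 := by exact_mod_cast NeZero.ne N
  induction n generalizing r with
  | zero => simp [sum_zcos_mul, sub_eq_zero, hN]
  | succ n ih =>
    rw [Function.iterate_succ_apply', lazyStep_eq, ih, ih, ih]
    simp only [pow_succ, mul_assoc, ← lazyStep_zcos, lazyStep_eq]
    simp only [Finset.sum_div, Finset.sum_mul, ← Finset.sum_add_distrib]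
    exact Finset.sum_congr rfl fun s _ => Finset.sum_congr rfl fun k _ => by ring

lemma lazyEigenvalue_pow_sq_le (k : ZMod N) :
    lazyEigenvalue k ^ N ^ 2 ≤ (1 / 5 : ℝ) ^ min k.val (-k).val := by
  have hN : (N : ℝ) ≠ 0 := by exact_mod_cast NeZero.ne N
  set m := min k.val (-k).val
  have h_le_exp : lazyEigenvalue k ≤ Real.exp (-(4 * (m / N : ℝ) ^ 2)) := by
    refine le_trans ?_ (Real.one_sub_le_exp_neg _)
    rw [lazyEigenvalue]
    linarith [zcos_le_one_sub_sq k]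
  have h_exp_four : Real.exp (-4) ≤ 1 / 5 := by
    rw [Real.exp_neg, ← one_div]
    exact one_div_le_one_div_of_le (by norm_num) (by linarith [Real.add_one_le_exp (4 : ℝ)])
  calc lazyEigenvalue k ^ N ^ 2
      ≤ Real.exp (-(4 * (m / N : ℝ) ^ 2)) ^ N ^ 2 :=
        pow_le_pow_left₀ (lazyEigenvalue_nonneg k) h_le_exp _
    _ = Real.exp (-4) ^ m ^ 2 := by
        rw [← Real.exp_nat_mul, ← Real.exp_nat_mul]
        congr 1
        push_cast
        field_simp
    _ ≤ Real.exp (-4) ^ m :=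
        pow_le_pow_of_le_one (Real.exp_pos _).le (by linarith) (Nat.le_self_pow two_ne_zero m)
    _ ≤ (1 / 5 : ℝ) ^ m := pow_le_pow_left₀ (Real.exp_pos _).le h_exp_four m

lemma sum_comp_val (f : ℕ → ℝ) : ∑ k : ZMod N, f k.val = ∑ j ∈ Finset.range N, f j := by
  obtain ⟨n, rfl⟩ := Nat.exists_eq_succ_of_ne_zero (NeZero.ne N)
  exact Fin.sum_univ_eq_sum_range f (n + 1)

lemma sum_lazyEigenvalue_pow_sq_le :
    ∑ k ∈ Finset.univ.erase (0 : ZMod N), lazyEigenvalue k ^ N ^ 2 ≤ 1 / 2 := by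
  have h_geom : ∑ k ∈ Finset.univ.erase (0 : ZMod N), (1 / 5 : ℝ) ^ k.val ≤ 1 / 4 := by
    have h_total := sum_comp_val (N := N) ((1 / 5 : ℝ) ^ ·)
    rw [← Finset.add_sum_erase _ _ (Finset.mem_univ 0), geom_sum_eq (by norm_num), ZMod.val_zero,
      pow_zero] at h_total
    have : ((1 / 5 : ℝ) ^ N - 1) / (1 / 5 - 1) ≤ 5 / 4 := by
      rw [div_le_iff_of_neg (by norm_num)]
      linarith [pow_nonneg (by norm_num : (0 : ℝ) ≤ 1 / 5) N]
    linarith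
  have h_neg : ∑ k ∈ Finset.univ.erase (0 : ZMod N), (1 / 5 : ℝ) ^ (-k).val =
      ∑ k ∈ Finset.univ.erase (0 : ZMod N), (1 / 5 : ℝ) ^ k.val :=
    Finset.sum_nbij' (- ·) (- ·) (by simp) (by simp) (by simp) (by simp) (by simp)
  have h_min (k : ZMod N) :
      (1 / 5 : ℝ) ^ min k.val (-k).val ≤ (1 / 5) ^ k.val + (1 / 5) ^ (-k).val := by
    rcases min_choice k.val (-k).val with h | h <;> rw [h]
    · exact le_add_of_nonneg_right (by positivity)
    · exact le_add_of_nonneg_left (by positivity)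
  calc ∑ k ∈ Finset.univ.erase (0 : ZMod N), lazyEigenvalue k ^ N ^ 2
      ≤ ∑ k ∈ Finset.univ.erase (0 : ZMod N), ((1 / 5 : ℝ) ^ k.val + (1 / 5) ^ (-k).val) :=
        Finset.sum_le_sum fun k _ => (lazyEigenvalue_pow_sq_le k).trans (h_min k)
    _ ≤ 1 / 2 := by rw [Finset.sum_add_distrib, h_neg]; linarith

lemma sum_le_lazyStep_iterate_sq {f : ZMod N → ℝ} (hf : ∀ s, 0 ≤ f s) (r : ZMod N) :
    ∑ s, f s ≤ 2 * N * (lazyStep 1)^[N ^ 2] f r := by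
  have hN : (N : ℝ) ≠ 0 := by exact_mod_cast NeZero.ne N
  have h_kernel (u : ZMod N) : 1 / 2 ≤ ∑ k, lazyEigenvalue k ^ N ^ 2 * zcos (k * u) := by
    rw [← Finset.add_sum_erase _ _ (Finset.mem_univ (0 : ZMod N)), lazyEigenvalue_zero, zero_mul,
      zcos_zero, one_pow, one_mul]
    have : -∑ k ∈ Finset.univ.erase (0 : ZMod N), lazyEigenvalue k ^ N ^ 2 ≤
        ∑ k ∈ Finset.univ.erase (0 : ZMod N), lazyEigenvalue k ^ N ^ 2 * zcos (k * u) := by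
      rw [← Finset.sum_neg_distrib]
      refine Finset.sum_le_sum fun k _ => ?_
      rw [← mul_neg_one]
      exact mul_le_mul_of_nonneg_left (abs_le.mp (abs_zcos_le_one _)).1
        (pow_nonneg (lazyEigenvalue_nonneg k) _)
    linarith [sum_lazyEigenvalue_pow_sq_le (N := N)]
  calc ∑ s, f s = 2 * ∑ s, 1 / 2 * f s := by rw [← Finset.mul_sum]; ring
    _ ≤ 2 * ∑ s, (∑ k, lazyEigenvalue k ^ N ^ 2 * zcos (k * (r - s))) * f s := by
        gcongr with s
        · exact hf s
        · exact h_kernel _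
    _ = 2 * N * (lazyStep 1)^[N ^ 2] f r := by
        rw [lazyStep_iterate_eq_sum]
        field_simp

end Cycle

section BulkWeight

variable {N : ℕ} [NeZero N]

/-- The truncated cosine weight on the cycle.  It vanishes on the half cycle around `0` and is
almost an eigenfunction of the second difference. -/
def bulkWeight (t : ZMod N) : ℝ := max 0 (-zcos t)

lemma bulkWeight_nonneg (t : ZMod N) : 0 ≤ bulkWeight t := le_max_left _ _

lemma bulkWeight_le_one (t : ZMod N) : bulkWeight t ≤ 1 :=
  max_le zero_le_one (neg_le.mp (abs_le.mp (abs_zcos_le_one t)).1)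

lemma neg_mul_bulkWeight_le_secondDiff (t : ZMod N) :
    -((2 * Real.pi / N) ^ 2 * bulkWeight t) ≤ secondDiff 1 bulkWeight t := by
  rcases le_total 0 (zcos t) with h | h
  · have h_zero : bulkWeight t = 0 := max_eq_left (by linarith)
    rw [secondDiff, h_zero]
    linarith [bulkWeight_nonneg (t + 1), bulkWeight_nonneg (t - 1)]
  · have h_eq : bulkWeight t = -zcos t := max_eq_right (by linarith)
    have h_one : 1 - (2 * Real.pi / N) ^ 2 / 2 ≤ zcos (1 : ZMod N) := by
      simpa using (Real.one_sub_sq_div_two_le_cos (x := 2 * Real.pi / N)).trans_eq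
        (by simpa using (zcos_intCast (N := N) 1).symm)
    have h_add : -zcos (t + 1) ≤ bulkWeight (t + 1) := le_max_right _ _
    have h_sub : -zcos (t - 1) ≤ bulkWeight (t - 1) := le_max_right _ _
    have := mul_le_mul_of_nonneg_left h_one (neg_nonneg.mpr h)
    rw [secondDiff, h_eq]
    linarith [zcos_add_add_zcos_sub t 1]

lemma le_four_mul_sum_bulkWeight (hN : 3 ≤ N) : (N : ℝ) ≤ 4 * ∑ t : ZMod N, bulkWeight t := by
  have h_one : (1 : ZMod N) ≠ 0 := by
    have : Fact (1 < N) := ⟨by omega⟩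
    exact one_ne_zero
  have h_two : (2 : ZMod N) ≠ 0 := by
    intro h
    have := (ZMod.natCast_eq_zero_iff 2 N).mp (by exact_mod_cast h)
    exact absurd (Nat.le_of_dvd two_pos this) (by omega)
  have h_sum : ∑ t : ZMod N, zcos t = 0 := by simpa [h_one] using sum_zcos_mul (1 : ZMod N)
  have h_sum_two : ∑ t : ZMod N, zcos (2 * t) = 0 := by
    simpa [h_two, mul_comm] using sum_zcos_mul (2 : ZMod N)
  calc (N : ℝ) = ∑ t : ZMod N, 2 * (zcos t ^ 2 - zcos t) := by
        simp only [zcos_sq, ← Finset.mul_sum, Finset.sum_sub_distrib, ← Finset.sum_div,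
          Finset.sum_add_distrib, h_sum, h_sum_two, Finset.sum_const, Finset.card_univ, ZMod.card,
          nsmul_eq_mul]
        ring
    _ ≤ ∑ t : ZMod N, 4 * bulkWeight t := by
        refine Finset.sum_le_sum fun t _ => ?_
        have := abs_le.mp (abs_zcos_le_one t)
        rcases le_total 0 (zcos t) with h | h
        · nlinarith [bulkWeight_nonneg t]
        · rw [show bulkWeight t = -zcos t from max_eq_right (by linarith)]
          nlinarith
    _ = 4 * ∑ t : ZMod N, bulkWeight t := Finset.mul_sum _ _ _ |>.symm

lemma zcos_nonneg_of_four_mul_val_le {t : ZMod N} (h : 4 * t.val ≤ N) : 0 ≤ zcos t := by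
  have hN : (0 : ℝ) < N := by exact_mod_cast NeZero.pos N
  have h : (4 * t.val : ℝ) ≤ N := by exact_mod_cast h
  rw [zcos_eq_cos_val]
  refine Real.cos_nonneg_of_neg_pi_div_two_le_of_le ?_ ?_
  · have : 0 ≤ 2 * Real.pi * t.val / N := by positivity
    linarith [Real.pi_pos]
  · rw [div_le_iff₀ hN]
    nlinarith [Real.pi_pos]

lemma le_eight_mul_slabDepth_of_bulkWeight_ne_zero {a : ℕ} (ha : 8 * a ≤ N) {t : ZMod N}
    (ht : bulkWeight t ≠ 0) : (N : ℤ) ≤ 8 * slabDepth a t := by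
  have h_neg : zcos t < 0 := by
    by_contra! h
    exact ht (max_eq_left (by linarith))
  have h_val : N < 4 * t.val := by
    by_contra! h
    exact h_neg.not_ge (zcos_nonneg_of_four_mul_val_le h)
  have h_val_neg : N < 4 * (-t).val := by
    by_contra! h
    exact h_neg.not_ge (zcos_neg t ▸ zcos_nonneg_of_four_mul_val_le h)
  have := ZMod.val_lt t
  rw [ZMod.neg_val] at h_val_neg
  split_ifs at h_val_neg <;> rw [slabDepth] <;> omega

lemma slabDepth_pos_of_bulkWeight_ne_zero {a : ℕ} (ha : 8 * a ≤ N) {t : ZMod N}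
    (ht : bulkWeight t ≠ 0) : 0 < slabDepth a t := by
  have := le_eight_mul_slabDepth_of_bulkWeight_ne_zero ha ht
  have := NeZero.pos N
  omega

end BulkWeight

section MinAlong

variable {d N : ℕ}

/-- The function obtained from `f` by minimising over the coordinate `k`. -/
def minAlong (k : Fin d) (f : Torus d N → ℝ) (x : Torus d N) : ℝ :=
  ⨅ r, f (Function.update x k r)

lemma minAlong_congr (k : Fin d) (f : Torus d N → ℝ) {x y : Torus d N}
    (h : ∀ i, i ≠ k → x i = y i) : minAlong k f x = minAlong k f y := by
  refine iInf_congr fun r => congrArg f (funext fun i => ?_)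
  by_cases hi : i = k
  · simp [hi]
  · simp [hi, h i hi]

lemma secondDiff_single_minAlong (k : Fin d) (f : Torus d N → ℝ) (x : Torus d N) :
    secondDiff (Pi.single k 1) (minAlong k f) x = 0 := by
  rw [secondDiff, minAlong_congr k f (x := x + Pi.single k 1) (y := x) fun i hi => by simp [hi],
    minAlong_congr k f (x := x - Pi.single k 1) (y := x) fun i hi => by simp [hi]]
  ring

variable [NeZero N]

lemma minAlong_le (k : Fin d) (f : Torus d N → ℝ) (x : Torus d N) : minAlong k f x ≤ f x := by
  simpa [minAlong] using ciInf_le (Finite.bddBelow_range fun r => f (Function.update x k r)) (x k)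

lemma exists_eq_minAlong (k : Fin d) (f : Torus d N → ℝ) (x : Torus d N) :
    ∃ r, f (Function.update x k r) = minAlong k f x :=
  exists_eq_ciInf_of_finite

lemma secondDiff_minAlong_le {k : Fin d} {f : Torus d N → ℝ} {x : Torus d N} {r : ZMod N}
    (hr : f (Function.update x k r) = minAlong k f x) (e : Torus d N) :
    secondDiff e (minAlong k f) x ≤ secondDiff e f (Function.update x k r) := by
  have h_add : minAlong k f (x + e) ≤ f (Function.update x k r + e) :=
    (minAlong_congr k f fun i hi => by simp [hi]).trans_le (minAlong_le k f _)
  have h_sub : minAlong k f (x - e) ≤ f (Function.update x k r - e) :=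
    (minAlong_congr k f fun i hi => by simp [hi]).trans_le (minAlong_le k f _)
  rw [secondDiff, secondDiff, hr]
  linarith

/-- At a minimiser of the column, superharmonicity bounds the second difference along the column by
minus those in the other directions, and these dominate the second differences of the minimum. -/
lemma minAlong_lazyStep_le {k : Fin d} {f : Torus d N → ℝ} {x : Torus d N}
    (h_super : ∀ r, laplacian f (Function.update x k r) ≤ 0) :
    minAlong k (lazyStep (Pi.single k 1) f) x ≤
      minAlong k f x - laplacian (minAlong k f) x / 4 := by
  obtain ⟨r, hr⟩ := exists_eq_minAlong k f x
  set y := Function.update x k r with hy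
  have h_step : minAlong k (lazyStep (Pi.single k 1) f) x ≤
      minAlong k f x + secondDiff (Pi.single k 1) f y / 4 := by
    rw [minAlong_congr k _ (x := x) (y := y) fun i hi => by simp [hy, hi], ← hr]
    exact minAlong_le k _ y
  have h_lap : laplacian (minAlong k f) x ≤
      laplacian f y - secondDiff (Pi.single k 1) f y := by
    rw [laplacian, laplacian, ← Finset.add_sum_erase _ _ (Finset.mem_univ k),
      ← Finset.add_sum_erase _ (fun i => secondDiff (Pi.single i 1) f y) (Finset.mem_univ k),
      secondDiff_single_minAlong, add_sub_cancel_left, zero_add]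
    exact Finset.sum_le_sum fun i _ => secondDiff_minAlong_le hr _
  linarith [h_super r]

end MinAlong

section Column

lemma sum_sum_update {ι α : Type*} [Fintype ι] [DecidableEq ι] [Fintype α] (k : ι)
    (f : (ι → α) → ℝ) :
    ∑ x, ∑ r, f (Function.update x k r) = Fintype.card α * ∑ x, f x := by
  have h_swap : Function.Involutive fun p : (ι → α) × α => (Function.update p.1 k p.2, p.1 k) :=
    fun p => by simp
  calc ∑ x, ∑ r, f (Function.update x k r) = ∑ p : (ι → α) × α, f p.1 := by
        rw [← Fintype.sum_prod_type' fun x r => f (Function.update x k r)]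
        exact Equiv.sum_comp h_swap.toPerm fun p => f p.1
    _ = Fintype.card α * ∑ x, f x := by simp [Fintype.sum_prod_type, Finset.mul_sum]

variable {d N : ℕ}

lemma update_add_right (k : Fin d) (x : Torus d N) (r s : ZMod N) :
    Function.update x k (r + s) = Function.update x k r + Pi.single k s := by
  rw [Pi.single, ← Function.update_add, add_zero]

lemma lazyStep_iterate_update (k : Fin d) (f : Torus d N → ℝ) (x : Torus d N) (n : ℕ)
    (r : ZMod N) :
    (lazyStep (Pi.single k 1))^[n] f (Function.update x k r) =
      (lazyStep 1)^[n] (fun s => f (Function.update x k s)) r := by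
  have h_semiconj : Function.Semiconj (fun (g : Torus d N → ℝ) s => g (Function.update x k s))
      (lazyStep (Pi.single k 1)) (lazyStep 1) := by
    intro g
    funext s
    have h_sub : Function.update x k (s - 1) = Function.update x k s - Pi.single k 1 := by
      rw [Pi.single, ← Function.update_sub, sub_zero]
    simp only [lazyStep_eq, update_add_right, h_sub]
  exact congrFun (h_semiconj.iterate_right n f) r

variable [NeZero N]

lemma sum_update_le_minAlong_lazyStep_iterate (k : Fin d) {f : Torus d N → ℝ}
    (hf : ∀ x, 0 ≤ f x) (x : Torus d N) :
    ∑ r, f (Function.update x k r) ≤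
      2 * N * minAlong k ((lazyStep (Pi.single k 1))^[N ^ 2] f) x := by
  obtain ⟨r, hr⟩ := exists_eq_minAlong k ((lazyStep (Pi.single k 1))^[N ^ 2] f) x
  rw [← hr, lazyStep_iterate_update]
  exact sum_le_lazyStep_iterate_sq (fun s => hf _) r

end Column

section SlabSuperharmonic

variable {d N a : ℕ} {j k : Fin d} {f : Torus d N → ℝ}

/-- Nonnegative functions which are superharmonic in the slab of points at distance more than `a`
from the hyperplane `x j = 0`. -/
structure SlabSuperharmonic (a : ℕ) (j : Fin d) (f : Torus d N → ℝ) : Prop where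
  nonneg : ∀ x, 0 ≤ f x
  laplacian_nonpos : ∀ x, 0 < slabDepth a (x j) → laplacian f x ≤ 0

lemma SlabSuperharmonic.lazyStep (hf : SlabSuperharmonic a j f) (hkj : k ≠ j) :
    SlabSuperharmonic a j (lazyStep (Pi.single k 1) f) where
  nonneg := lazyStep_nonneg _ hf.nonneg
  laplacian_nonpos x hx := by
    rw [laplacian_lazyStep, lazyStep_eq]
    linarith [hf.laplacian_nonpos x hx,
      hf.laplacian_nonpos (x + Pi.single k 1) (by simpa [hkj.symm] using hx),
      hf.laplacian_nonpos (x - Pi.single k 1) (by simpa [hkj.symm] using hx)]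

variable [NeZero N]

lemma SlabSuperharmonic.minAlong (hf : SlabSuperharmonic a j f) (hkj : k ≠ j) :
    SlabSuperharmonic a j (minAlong k f) where
  nonneg x := Real.iInf_nonneg fun r => hf.nonneg _
  laplacian_nonpos x hx := by
    obtain ⟨r, hr⟩ := exists_eq_minAlong k f x
    exact (Finset.sum_le_sum fun i _ => secondDiff_minAlong_le hr _).trans
      (hf.laplacian_nonpos (Function.update x k r) (by simpa [hkj.symm] using hx))

/-- The mass of `f`, weighted by `bulkWeight` in the coordinate `j`. -/
def bulkMass (j : Fin d) (f : Torus d N → ℝ) : ℝ := ∑ x, bulkWeight (x j) * f x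

/-- The factor by which `bulkMass` may drop when one coordinate is minimised out. -/
def minAlongLoss : ℝ := 2 * Real.exp (Real.pi ^ 2)

lemma minAlongLoss_pos : 0 < minAlongLoss := by
  rw [minAlongLoss]
  positivity

lemma bulkMass_minAlong_lazyStep_le (ha : 8 * a ≤ N) (hf : SlabSuperharmonic a j f)
    (hkj : k ≠ j) :
    bulkMass j (minAlong k (lazyStep (Pi.single k 1) f)) ≤
      (1 + (Real.pi / N) ^ 2) * bulkMass j (minAlong k f) := by
  have h_step (x : Torus d N) :
      bulkWeight (x j) * minAlong k (lazyStep (Pi.single k 1) f) x ≤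
        bulkWeight (x j) * (minAlong k f x - laplacian (minAlong k f) x / 4) := by
    by_cases hx : bulkWeight (x j) = 0
    · simp [hx]
    · have h_depth := slabDepth_pos_of_bulkWeight_ne_zero ha hx
      refine mul_le_mul_of_nonneg_left (minAlong_lazyStep_le fun r => ?_) (bulkWeight_nonneg _)
      exact hf.laplacian_nonpos _ (by simpa [hkj.symm] using h_depth)
  have h_parts : -((2 * Real.pi / N) ^ 2 * bulkMass j (minAlong k f)) ≤
      ∑ x, bulkWeight (x j) * laplacian (minAlong k f) x := by
    rw [sum_mul_laplacian (fun x => bulkWeight (x j)), bulkMass, Finset.mul_sum,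
      ← Finset.sum_neg_distrib]
    refine Finset.sum_le_sum fun x _ => ?_
    rw [laplacian_comp_eval, ← mul_assoc, ← neg_mul]
    exact mul_le_mul_of_nonneg_right (neg_mul_bulkWeight_le_secondDiff _)
      ((hf.minAlong hkj).nonneg x)
  calc bulkMass j (minAlong k (lazyStep (Pi.single k 1) f))
      ≤ ∑ x, bulkWeight (x j) * (minAlong k f x - laplacian (minAlong k f) x / 4) :=
        Finset.sum_le_sum fun x _ => h_step x
    _ = bulkMass j (minAlong k f) - (∑ x, bulkWeight (x j) * laplacian (minAlong k f) x) / 4 := by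
        simp only [bulkMass, mul_sub, Finset.sum_sub_distrib, mul_div_assoc', Finset.sum_div]
    _ ≤ bulkMass j (minAlong k f) + (2 * Real.pi / N) ^ 2 * bulkMass j (minAlong k f) / 4 := by
        linarith
    _ = (1 + (Real.pi / N) ^ 2) * bulkMass j (minAlong k f) := by ring

lemma bulkMass_minAlong_lazyStep_iterate_le (ha : 8 * a ≤ N) (hf : SlabSuperharmonic a j f)
    (hkj : k ≠ j) (n : ℕ) :
    bulkMass j (minAlong k ((lazyStep (Pi.single k 1))^[n] f)) ≤
      (1 + (Real.pi / N) ^ 2) ^ n * bulkMass j (minAlong k f) := by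
  induction n generalizing f with
  | zero => simp
  | succ n ih =>
    rw [Function.iterate_succ_apply, pow_succ, mul_assoc]
    exact (ih (hf.lazyStep hkj)).trans
      (mul_le_mul_of_nonneg_left (bulkMass_minAlong_lazyStep_le ha hf hkj) (by positivity))

lemma bulkMass_nonneg (hf : ∀ x, 0 ≤ f x) : 0 ≤ bulkMass j f :=
  Finset.sum_nonneg fun x _ => mul_nonneg (bulkWeight_nonneg _) (hf x)

lemma bulkMass_le_mul_bulkMass_minAlong (ha : 8 * a ≤ N) (hf : SlabSuperharmonic a j f)
    (hkj : k ≠ j) : bulkMass j f ≤ minAlongLoss * bulkMass j (minAlong k f) := by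
  have hN : (0 : ℝ) < N := by exact_mod_cast NeZero.pos N
  have h_exp : (1 + (Real.pi / N) ^ 2) ^ N ^ 2 ≤ Real.exp (Real.pi ^ 2) := by
    refine (pow_le_pow_left₀ (by positivity) ((add_comm _ _).trans_le
      (Real.add_one_le_exp ((Real.pi / N) ^ 2))) _).trans_eq ?_
    rw [← Real.exp_nat_mul]
    congr 1
    push_cast
    field_simp
  refine le_of_mul_le_mul_left ?_ hN
  calc N * bulkMass j f
      = ∑ x : Torus d N, bulkWeight (x j) * ∑ r, f (Function.update x k r) := by
        have := sum_sum_update k fun x : Torus d N => bulkWeight (x j) * f x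
        rw [ZMod.card] at this
        simp [bulkMass, ← this, Finset.mul_sum, hkj.symm]
    _ ≤ ∑ x : Torus d N,
          bulkWeight (x j) * (2 * N * minAlong k ((lazyStep (Pi.single k 1))^[N ^ 2] f) x) := by
        gcongr with x
        · exact bulkWeight_nonneg _
        · exact sum_update_le_minAlong_lazyStep_iterate k hf.nonneg x
    _ = 2 * N * bulkMass j (minAlong k ((lazyStep (Pi.single k 1))^[N ^ 2] f)) := by
        rw [bulkMass, Finset.mul_sum]
        exact Finset.sum_congr rfl fun x _ => by ring
    _ ≤ 2 * N * (Real.exp (Real.pi ^ 2) * bulkMass j (minAlong k f)) := by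
        gcongr
        exact (bulkMass_minAlong_lazyStep_iterate_le ha hf hkj _).trans
          (mul_le_mul_of_nonneg_right h_exp (bulkMass_nonneg (hf.minAlong hkj).nonneg))
    _ = N * (minAlongLoss * bulkMass j (minAlong k f)) := by rw [minAlongLoss]; ring

lemma exists_slabSuperharmonic_dependsOn (ha : 8 * a ≤ N) (hf : SlabSuperharmonic a j f)
    (s : Finset (Fin d)) (hj : j ∉ s) :
    ∃ g, SlabSuperharmonic a j g ∧ (∀ x, g x ≤ f x) ∧ DependsOn g (sᶜ : Set (Fin d)) ∧
      bulkMass j f ≤ minAlongLoss ^ s.card * bulkMass j g := by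
  induction s using Finset.induction_on with
  | empty => exact ⟨f, hf, fun x => le_rfl, by simpa using dependsOn_univ f, by simp⟩
  | insert k s hk ih =>
    obtain ⟨hjk, hjs⟩ : j ≠ k ∧ j ∉ s := by simpa using hj
    obtain ⟨g, hg, h_le, h_dep, h_mass⟩ := ih hjs
    refine ⟨minAlong k g, hg.minAlong hjk.symm, fun x => (minAlong_le k g x).trans (h_le x), ?_, ?_⟩
    · intro x y hxy
      refine iInf_congr fun r => h_dep fun i hi => ?_
      by_cases hik : i = k
      · simp [hik]
      · simpa [hik] using hxy i (by simpa [hik] using hi)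
    · rw [Finset.card_insert_of_notMem hk, pow_succ, mul_assoc]
      exact h_mass.trans (mul_le_mul_of_nonneg_left
        (bulkMass_le_mul_bulkMass_minAlong ha hg hjk.symm) (pow_nonneg minAlongLoss_pos.le _))

lemma slabDepth_mul_bulkMass_le_of_eval {m : ZMod N → ℝ} (ha : 8 * a ≤ N)
    (hm : SlabSuperharmonic a j fun y : Torus d N => m (y j)) {t : ZMod N}
    (ht : 0 < slabDepth a t) :
    slabDepth a t * bulkMass j (fun y : Torus d N => m (y j)) ≤ N ^ (d + 1) * m t := by
  have h_nonneg (u : ZMod N) : 0 ≤ m u := hm.nonneg fun _ => u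
  have h_super (u : ZMod N) (hu : 0 < slabDepth a u) : secondDiff 1 m u ≤ 0 := by
    simpa [laplacian_comp_eval] using hm.laplacian_nonpos (fun _ => u) hu
  have h_term (u : ZMod N) : slabDepth a t * (bulkWeight u * m u) ≤ N * m t := by
    by_cases hu : bulkWeight u = 0
    · simpa [hu] using mul_nonneg N.cast_nonneg (h_nonneg t)
    · have h_depth := slabDepth_pos_of_bulkWeight_ne_zero ha hu
      have h_le := mul_le_of_le_one_left (h_nonneg u) (bulkWeight_le_one u)
      refine le_trans ?_ (slabDepth_mul_le h_nonneg h_super ht h_depth)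
      exact mul_le_mul_of_nonneg_left h_le (by exact_mod_cast ht.le)
  calc slabDepth a t * bulkMass j (fun y : Torus d N => m (y j))
      ≤ ∑ _y : Torus d N, N * m t := by
        rw [bulkMass, Finset.mul_sum]
        exact Finset.sum_le_sum fun y _ => h_term (y j)
    _ = N ^ (d + 1) * m t := by
        simp [pow_succ, mul_assoc]

lemma SlabSuperharmonic.slabDepth_mul_bulkMass_le (hf : SlabSuperharmonic a j f)
    (ha : 8 * a ≤ N) {x : Torus d N} (hx : 0 < slabDepth a (x j)) :
    slabDepth a (x j) * bulkMass j f ≤ minAlongLoss ^ (d - 1) * N ^ (d + 1) * f x := by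
  obtain ⟨g, hg, h_le, h_dep, h_mass⟩ :=
    exists_slabSuperharmonic_dependsOn ha hf (Finset.univ.erase j) (Finset.notMem_erase _ _)
  obtain ⟨m, rfl⟩ : ∃ m : ZMod N → ℝ, g = fun y => m (y j) :=
    ⟨fun t => g fun _ => t, funext fun y => h_dep fun i hi => by
      obtain rfl : i = j := by simpa using hi
      rfl⟩
  rw [Finset.card_erase_of_mem (Finset.mem_univ j), Finset.card_univ, Fintype.card_fin] at h_mass
  calc slabDepth a (x j) * bulkMass j f
      ≤ slabDepth a (x j) * (minAlongLoss ^ (d - 1) * bulkMass j fun y => m (y j)) :=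
        mul_le_mul_of_nonneg_left h_mass (by exact_mod_cast hx.le)
    _ = minAlongLoss ^ (d - 1) * (slabDepth a (x j) * bulkMass j fun y => m (y j)) := by ring
    _ ≤ minAlongLoss ^ (d - 1) * (N ^ (d + 1) * m (x j)) :=
        mul_le_mul_of_nonneg_left (slabDepth_mul_bulkMass_le_of_eval ha hg hx)
          (pow_nonneg minAlongLoss_pos.le _)
    _ ≤ minAlongLoss ^ (d - 1) * (N ^ (d + 1) * f x) := by
        gcongr
        · exact pow_nonneg minAlongLoss_pos.le _
        · exact h_le x
    _ = minAlongLoss ^ (d - 1) * N ^ (d + 1) * f x := by ring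

end SlabSuperharmonic

section Marginal

variable {d N : ℕ} [NeZero N]

/-- The sum of `f` over the hyperplane `x i = t`. -/
def marginal (i : Fin d) (f : Torus d N → ℝ) (t : ZMod N) : ℝ := ∑ x with x i = t, f x

lemma sum_mul_marginal (h : ZMod N → ℝ) (i : Fin d) (f : Torus d N → ℝ) :
    ∑ t, h t * marginal i f t = ∑ x, h (x i) * f x := by
  rw [← Finset.sum_fiberwise Finset.univ (fun x : Torus d N => x i)]
  refine Finset.sum_congr rfl fun t _ => ?_
  rw [marginal, Finset.mul_sum]
  exact Finset.sum_congr rfl fun x hx => by rw [(Finset.mem_filter.mp hx).2]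

lemma secondDiff_marginal (i : Fin d) (f : Torus d N → ℝ) (t : ZMod N) :
    secondDiff 1 (marginal i f) t = marginal i (laplacian f) t := by
  have h_test (h : ZMod N → ℝ) :
      ∑ s, h s * secondDiff 1 (marginal i f) s = ∑ s, h s * marginal i (laplacian f) s := by
    rw [sum_mul_secondDiff, sum_mul_marginal, sum_mul_marginal,
      sum_mul_laplacian fun x => h (x i)]
    simp only [laplacian_comp_eval]
  simpa [Pi.single_apply] using h_test (Pi.single t 1)

end Marginal

section Mass

variable {d N a : ℕ} [NeZero N] {f : Torus d N → ℝ}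

lemma le_mul_sum_bulkWeight_mul_bulkWeight (hN : 3 ≤ N) {i j : Fin d} (hij : i ≠ j) :
    (N : ℝ) ^ d ≤ 16 * ∑ x : Torus d N, bulkWeight (x i) * bulkWeight (x j) := by
  have hN_pos : (0 : ℝ) < N := by exact_mod_cast NeZero.pos N
  set S := ∑ t : ZMod N, bulkWeight t
  have h_single : N * ∑ x : Torus d N, bulkWeight (x i) = N ^ d * S := by
    have := sum_sum_update i fun x : Torus d N => bulkWeight (x i)
    rw [ZMod.card] at this
    simp [S, ← this]
  have h_pair : N * ∑ x : Torus d N, bulkWeight (x i) * bulkWeight (x j) =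
      S * ∑ x : Torus d N, bulkWeight (x i) := by
    have := sum_sum_update j fun x : Torus d N => bulkWeight (x i) * bulkWeight (x j)
    rw [ZMod.card] at this
    rw [← this, Finset.mul_sum]
    refine Finset.sum_congr rfl fun x _ => ?_
    simp [S, hij, ← Finset.sum_mul, mul_comm]
  have h_sq : (N : ℝ) ^ 2 ≤ (4 * S) ^ 2 :=
    pow_le_pow_left₀ hN_pos.le (le_four_mul_sum_bulkWeight hN) 2
  refine le_of_mul_le_mul_left ?_ (pow_pos hN_pos 2)
  calc (N : ℝ) ^ 2 * N ^ d ≤ (4 * S) ^ 2 * N ^ d := by gcongr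
    _ = 16 * S * (N ^ d * S) := by ring
    _ = 16 * N * (S * ∑ x : Torus d N, bulkWeight (x i)) := by rw [← h_single]; ring
    _ = N ^ 2 * (16 * ∑ x : Torus d N, bulkWeight (x i) * bulkWeight (x j)) := by
        rw [← h_pair]; ring

lemma SlabSuperharmonic.mul_bulkWeight_le {i : Fin d} (hf : SlabSuperharmonic a i f)
    (ha : 8 * a ≤ N) (x : Torus d N) :
    bulkMass i f * bulkWeight (x i) ≤
      8 * minAlongLoss ^ (d - 1) * N ^ d * (bulkWeight (x i) * f x) := by
  by_cases hx : bulkWeight (x i) = 0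
  · simp [hx]
  have hN : (0 : ℝ) < N := by exact_mod_cast NeZero.pos N
  have h_depth : (N : ℝ) ≤ 8 * slabDepth a (x i) := by
    exact_mod_cast le_eight_mul_slabDepth_of_bulkWeight_ne_zero ha hx
  have h_pos := slabDepth_pos_of_bulkWeight_ne_zero ha hx
  have h_le : bulkMass i f ≤ 8 * minAlongLoss ^ (d - 1) * N ^ d * f x := by
    refine le_of_mul_le_mul_left ?_ hN
    calc N * bulkMass i f ≤ 8 * slabDepth a (x i) * bulkMass i f :=
          mul_le_mul_of_nonneg_right h_depth (bulkMass_nonneg hf.nonneg)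
      _ ≤ 8 * (minAlongLoss ^ (d - 1) * N ^ (d + 1) * f x) := by
          rw [mul_assoc]
          exact mul_le_mul_of_nonneg_left (hf.slabDepth_mul_bulkMass_le ha h_pos) (by norm_num)
      _ = N * (8 * minAlongLoss ^ (d - 1) * N ^ d * f x) := by ring
  calc bulkMass i f * bulkWeight (x i)
      ≤ 8 * minAlongLoss ^ (d - 1) * N ^ d * f x * bulkWeight (x i) :=
        mul_le_mul_of_nonneg_right h_le (bulkWeight_nonneg _)
    _ = 8 * minAlongLoss ^ (d - 1) * N ^ d * (bulkWeight (x i) * f x) := by ring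

lemma SlabSuperharmonic.bulkMass_le_mul_bulkMass {i j : Fin d} (hf : SlabSuperharmonic a i f)
    (hN : 3 ≤ N) (ha : 8 * a ≤ N) :
    bulkMass i f ≤ 128 * minAlongLoss ^ (d - 1) * bulkMass j f := by
  have h_nonneg := bulkMass_nonneg (j := i) hf.nonneg
  have h_loss : 1 ≤ minAlongLoss ^ (d - 1) :=
    one_le_pow₀ (by rw [minAlongLoss]; linarith [Real.one_le_exp (sq_nonneg Real.pi)])
  rcases eq_or_ne i j with rfl | hij
  · exact le_mul_of_one_le_left h_nonneg (by linarith)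
  have hN_pos : (0 : ℝ) < (N : ℝ) ^ d := by
    have := NeZero.pos N
    positivity
  have h_term (x : Torus d N) : bulkMass i f * bulkWeight (x i) * bulkWeight (x j) ≤
      8 * minAlongLoss ^ (d - 1) * N ^ d * (bulkWeight (x j) * f x) := by
    have h_le := (hf.mul_bulkWeight_le ha x).trans (mul_le_mul_of_nonneg_left
      (mul_le_of_le_one_left (hf.nonneg x) (bulkWeight_le_one _)) (by positivity))
    linarith [mul_le_mul_of_nonneg_right h_le (bulkWeight_nonneg (x j))]
  refine le_of_mul_le_mul_left ?_ hN_pos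
  calc N ^ d * bulkMass i f
      ≤ (16 * ∑ x : Torus d N, bulkWeight (x i) * bulkWeight (x j)) * bulkMass i f :=
        mul_le_mul_of_nonneg_right (le_mul_sum_bulkWeight_mul_bulkWeight hN hij) h_nonneg
    _ = 16 * ∑ x : Torus d N, bulkMass i f * bulkWeight (x i) * bulkWeight (x j) := by
        simp only [Finset.mul_sum, Finset.sum_mul]
        exact Finset.sum_congr rfl fun x _ => by ring
    _ ≤ 16 * ∑ x, 8 * minAlongLoss ^ (d - 1) * N ^ d * (bulkWeight (x j) * f x) :=
        mul_le_mul_of_nonneg_left (Finset.sum_le_sum fun x _ => h_term x) (by norm_num)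
    _ = N ^ d * (128 * minAlongLoss ^ (d - 1) * bulkMass j f) := by
        simp only [bulkMass, Finset.mul_sum]
        exact Finset.sum_congr rfl fun x _ => by ring

lemma SlabSuperharmonic.mul_marginal_le {i : Fin d} (hf : SlabSuperharmonic a i f)
    (hN : 3 ≤ N) (ha : 8 * a ≤ N) {t : ZMod N} (ht : 0 < slabDepth a t) :
    N * marginal i f t ≤ 32 * bulkMass i f := by
  have hN_pos : (0 : ℝ) < N := by exact_mod_cast NeZero.pos N
  have h_nonneg (s : ZMod N) : 0 ≤ marginal i f s := Finset.sum_nonneg fun x _ => hf.nonneg x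
  have h_super (s : ZMod N) (hs : 0 < slabDepth a s) : secondDiff 1 (marginal i f) s ≤ 0 := by
    rw [secondDiff_marginal]
    refine Finset.sum_nonpos fun x hx => hf.laplacian_nonpos x ?_
    rwa [(Finset.mem_filter.mp hx).2]
  have h_term (s : ZMod N) :
      bulkWeight s * marginal i f t ≤ 8 * (bulkWeight s * marginal i f s) := by
    by_cases hs : bulkWeight s = 0
    · simp [hs]
    have h_depth : (N : ℝ) ≤ 8 * slabDepth a s := by
      exact_mod_cast le_eight_mul_slabDepth_of_bulkWeight_ne_zero ha hs
    have h_pos := slabDepth_pos_of_bulkWeight_ne_zero ha hs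
    have h_le : marginal i f t ≤ 8 * marginal i f s := by
      refine le_of_mul_le_mul_left ?_ hN_pos
      linarith [mul_le_mul_of_nonneg_right h_depth (h_nonneg t),
        slabDepth_mul_le h_nonneg h_super h_pos ht]
    linarith [mul_le_mul_of_nonneg_left h_le (bulkWeight_nonneg s)]
  calc N * marginal i f t ≤ 4 * (∑ s : ZMod N, bulkWeight s) * marginal i f t :=
        mul_le_mul_of_nonneg_right (le_four_mul_sum_bulkWeight hN) (h_nonneg t)
    _ ≤ 4 * ∑ s, 8 * (bulkWeight s * marginal i f s) := by
        rw [mul_assoc, Finset.sum_mul]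
        exact mul_le_mul_of_nonneg_left (Finset.sum_le_sum fun s _ => h_term s) (by norm_num)
    _ = 32 * bulkMass i f := by
        rw [← Finset.mul_sum, sum_mul_marginal, bulkMass]
        ring

lemma SlabSuperharmonic.sum_slab_le {i : Fin d} (hf : SlabSuperharmonic a i f) (hN : 3 ≤ N)
    (ha : 8 * a ≤ N) : ∑ x with 0 < slabDepth a (x i), f x ≤ 32 * bulkMass i f := by
  have hN_pos : (0 : ℝ) < N := by exact_mod_cast NeZero.pos N
  have h_nonneg := bulkMass_nonneg (j := i) hf.nonneg
  have h_term (t : ZMod N) :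
      (if 0 < slabDepth a t then 1 else 0) * marginal i f t ≤ 32 * bulkMass i f / N := by
    split_ifs with ht
    · rw [one_mul, le_div_iff₀' hN_pos]
      exact hf.mul_marginal_le hN ha ht
    · rw [zero_mul]
      positivity
  calc ∑ x with 0 < slabDepth a (x i), f x
      = ∑ t, (if 0 < slabDepth a t then 1 else 0) * marginal i f t := by
        rw [sum_mul_marginal, Finset.sum_filter]
        exact Finset.sum_congr rfl fun x _ => by split_ifs <;> simp
    _ ≤ ∑ _t : ZMod N, 32 * bulkMass i f / N := Finset.sum_le_sum fun t _ => h_term t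
    _ = 32 * bulkMass i f := by
        rw [Finset.sum_const, Finset.card_univ, ZMod.card, nsmul_eq_mul]
        field_simp

lemma sum_le_mul_of_slabSuperharmonic (hN : 3 ≤ N) (ha : 8 * a ≤ N)
    (hf : ∀ i, SlabSuperharmonic a i f)
    (h_supp : ∀ x, f x ≠ 0 → ∃ i, 0 < slabDepth a (x i)) {x : Torus d N}
    {j : Fin d} (hx : 0 < slabDepth a (x j)) :
    ∑ y, f y ≤ 4096 * d * (minAlongLoss ^ (d - 1)) ^ 2 * N ^ (d + 1) * f x := by
  have h_loss : 0 ≤ minAlongLoss ^ (d - 1) := pow_nonneg minAlongLoss_pos.le _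
  have h_cover : ∑ y, f y ≤ ∑ i, ∑ y with 0 < slabDepth a (y i), f y := by
    simp only [Finset.sum_filter]
    rw [Finset.sum_comm]
    refine Finset.sum_le_sum fun y _ => ?_
    have h_ite (i : Fin d) : 0 ≤ if 0 < slabDepth a (y i) then f y else 0 := by
      split_ifs
      exacts [(hf i).nonneg y, le_rfl]
    by_cases hy : f y = 0
    · rw [hy]
      exact Finset.sum_nonneg fun i _ => by simp
    · obtain ⟨i, hi⟩ := h_supp y hy
      simpa [hi] using Finset.single_le_sum (fun i _ => h_ite i) (Finset.mem_univ i)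
  have h_bulk (i : Fin d) :
      ∑ y with 0 < slabDepth a (y i), f y ≤ 4096 * minAlongLoss ^ (d - 1) * bulkMass j f := by
    linarith [(hf i).sum_slab_le hN ha, (hf i).bulkMass_le_mul_bulkMass (j := j) hN ha]
  have h_point : bulkMass j f ≤ minAlongLoss ^ (d - 1) * N ^ (d + 1) * f x :=
    (le_mul_of_one_le_left (bulkMass_nonneg (hf j).nonneg) (by exact_mod_cast hx)).trans
      ((hf j).slabDepth_mul_bulkMass_le ha hx)
  calc ∑ y, f y ≤ ∑ _i : Fin d, 4096 * minAlongLoss ^ (d - 1) * bulkMass j f :=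
        h_cover.trans (Finset.sum_le_sum fun i _ => h_bulk i)
    _ = d * (4096 * minAlongLoss ^ (d - 1)) * bulkMass j f := by simp [mul_assoc]
    _ ≤ d * (4096 * minAlongLoss ^ (d - 1)) * (minAlongLoss ^ (d - 1) * N ^ (d + 1) * f x) := by
        gcongr
    _ = 4096 * d * (minAlongLoss ^ (d - 1)) ^ 2 * N ^ (d + 1) * f x := by ring

end Mass

section Adjacency

variable {d N : ℕ}

/-- The displacement by `u = ±1` along the `i`-th coordinate axis, for `p = (i, u)`. -/
def unitStep (p : Fin d × ℤˣ) : Torus d N :=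
  Pi.single p.1 ((p.2 : ℤ) : ZMod N)

lemma adj_iff_exists_unitStep (hN : 2 ≤ N) {x y : Torus d N} :
    adj x y ↔ ∃ p, x + unitStep p = y := by
  have : Fact (1 < N) := ⟨hN⟩
  constructor
  · rintro ⟨-, i, h_step, h_eq⟩
    obtain ⟨u, hu⟩ : ∃ u : ℤˣ, x i + ((u : ℤ) : ZMod N) = y i := by
      rcases h_step with h | h
      · exact ⟨1, by simp [h]⟩
      · exact ⟨-1, by simp [h]⟩
    refine ⟨(i, u), funext fun j => ?_⟩
    rcases eq_or_ne j i with rfl | hj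
    · simpa [unitStep] using hu
    · simp [unitStep, hj, h_eq j hj]
  · rintro ⟨⟨i, u⟩, rfl⟩
    refine ⟨fun h => ?_, i, ?_, fun j hj => by simp [unitStep, hj]⟩
    · rcases Int.units_eq_one_or u with rfl | rfl <;> simpa [unitStep] using congrFun h i
    · rcases Int.units_eq_one_or u with rfl | rfl <;> simp [unitStep]

lemma unitStep_injective (hN : 3 ≤ N) :
    Function.Injective (unitStep : Fin d × ℤˣ → Torus d N) := by
  have : Fact (2 < N) := ⟨hN⟩
  have : Fact (1 < N) := ⟨by omega⟩
  rintro ⟨i, u⟩ ⟨j, v⟩ h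
  have h_apply := congrFun h i
  obtain rfl : i = j := by
    by_contra h_ne
    rcases Int.units_eq_one_or u with rfl | rfl <;> simp [unitStep, h_ne] at h_apply
  rcases Int.units_eq_one_or u with rfl | rfl <;> rcases Int.units_eq_one_or v with rfl | rfl <;>
    simp_all [unitStep, ZMod.neg_one_ne_one, ZMod.neg_one_ne_one.symm]

variable [NeZero N]

lemma sum_adj_eq_laplacian_add (hN : 3 ≤ N) (v : Torus d N → ℝ) (x : Torus d N) :
    ∑ y, (if adj x y then v y else 0) = laplacian v x + 2 * d * v x := by
  calc ∑ y, (if adj x y then v y else 0) = ∑ p, v (x + unitStep p) := by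
        refine (Finset.sum_of_injOn (fun p => x + unitStep p)
          ((add_right_injective x).comp (unitStep_injective hN)).injOn (by simp) ?_ ?_).symm
        · intro y _ hy
          rw [if_neg]
          simpa [adj_iff_exists_unitStep (by omega : 2 ≤ N)] using hy
        · intro p _
          rw [if_pos ((adj_iff_exists_unitStep (by omega)).2 ⟨p, rfl⟩)]
    _ = laplacian v x + 2 * d * v x := by
        have h_const : 2 * d * v x = ∑ _i : Fin d, 2 * v x := by
          rw [Fin.sum_const, nsmul_eq_mul]
          ring
        rw [Fintype.sum_prod_type, laplacian, h_const, ← Finset.sum_add_distrib]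
        simp [unitStep, UnitsInt.univ, secondDiff, Pi.single_neg, sub_eq_add_neg]

lemma two_mul_killedMul (hN : 3 ≤ N) {B : Set (Torus d N)} {v : Torus d N → ℝ}
    (hv : ∀ x ∈ B, v x = 0) (x : Torus d N) :
    2 * d * killedMul d N B v x = laplacian v x + 2 * d * v x := by
  rcases d.eq_zero_or_pos with rfl | hd
  · simp [laplacian]
  rw [← sum_adj_eq_laplacian_add hN, killedMul, finsum_eq_sum_of_fintype, Finset.mul_sum]
  refine Finset.sum_congr rfl fun y _ => ?_
  by_cases hy : y ∈ B
  · simp [hy, hv y hy]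
  · simp only [hy, not_false_eq_true, true_and, mul_ite, mul_zero]
    field_simp

end Adjacency

namespace IsQSD

variable {d N : ℕ} {B : Set (Torus d N)} {σ : Torus d N → ℝ}

lemma laplacian_nonpos (hN : 3 ≤ N) (hσ : IsQSD d N B σ) {x : Torus d N} (hx : x ∉ B) :
    laplacian σ x ≤ 0 := by
  have : NeZero N := ⟨by omega⟩
  obtain ⟨h_nonneg, h_zero, h_sum, l, h_eigen, -⟩ := hσ
  have h_laplacian (y : Torus d N) (hy : y ∉ B) : laplacian σ y = 2 * d * (l - 1) * σ y := by
    linear_combination 2 * d * h_eigen y hy - two_mul_killedMul hN h_zero y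
  obtain ⟨y, h_max⟩ := Finite.exists_max σ
  have hy : 0 < σ y := by
    by_contra! h_nonpos
    rw [finsum_eq_sum_of_fintype] at h_sum
    linarith [Finset.sum_nonpos fun z (_ : z ∈ Finset.univ) => (h_max z).trans h_nonpos]
  have hy_notMem : y ∉ B := fun h => hy.ne' (h_zero y h)
  have h_rate : 2 * d * (l - 1) ≤ 0 := by
    refine nonpos_of_mul_nonpos_left ?_ hy
    rw [← h_laplacian y hy_notMem]
    exact laplacian_nonpos_of_forall_le h_max
  rw [h_laplacian x hx]
  exact mul_nonpos_of_nonpos_of_nonneg h_rate (h_nonneg x)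

lemma one_le_mul_of_torusBall {r : ℝ} (hr : 0 ≤ r) (hrN : 8 * ⌊r⌋₊ ≤ N) (hN : 3 ≤ N)
    (hσ : IsQSD d N (torusBall 0 r) σ) {x : Torus d N} (hx : x ∉ torusBall 0 r) :
    1 ≤ 4096 * d * (minAlongLoss ^ (d - 1)) ^ 2 * N ^ (d + 1) * σ x := by
  have : NeZero N := ⟨by omega⟩
  obtain ⟨j, hj⟩ := (notMem_torusBall_zero_iff hr).1 hx
  rw [← hσ.2.2.1, finsum_eq_sum_of_fintype]
  refine sum_le_mul_of_slabSuperharmonic hN hrN (fun i => ⟨hσ.1, fun y hy => ?_⟩) ?_ hj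
  · exact hσ.laplacian_nonpos hN ((notMem_torusBall_zero_iff hr).2 ⟨i, hy⟩)
  · exact fun y hy => (notMem_torusBall_zero_iff hr).1 fun h => hy (hσ.2.1 y h)

end IsQSD

lemma eventually_eight_mul_floor_rpow_le {p : ℝ} (hp : p < 1) :
    ∀ᶠ N : ℕ in atTop, 8 * ⌊(N : ℝ) ^ p⌋₊ ≤ N := by
  have h_tendsto : Tendsto (fun N : ℕ => (N : ℝ) ^ (1 - p)) atTop atTop :=
    (tendsto_rpow_atTop (by linarith)).comp tendsto_natCast_atTop_atTop
  filter_upwards [h_tendsto.eventually_ge_atTop 8, eventually_gt_atTop 0] with N h_eight hN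
  have hN : (0 : ℝ) < N := by exact_mod_cast hN
  have h_floor := Nat.floor_le (Real.rpow_nonneg hN.le p)
  have h_le : (8 : ℝ) * ⌊(N : ℝ) ^ p⌋₊ ≤ N := by
    calc (8 : ℝ) * ⌊(N : ℝ) ^ p⌋₊ ≤ (N : ℝ) ^ (1 - p) * (N : ℝ) ^ p := by gcongr
      _ = N := by rw [← Real.rpow_add hN, sub_add_cancel, Real.rpow_one]
  exact_mod_cast h_le

theorem qsd_lower_bound_general {d : ℕ} (hd : 0 < d) {ε : ℝ} (hε : 0 < ε) :
    ∃ c : ℝ, 0 < c ∧ ∃ N₀ : ℕ, ∀ N : ℕ, N₀ ≤ N →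
      ∀ σ : Torus d N → ℝ,
        IsQSD d N (torusBall (0 : Torus d N) ((N : ℝ) ^ (1 - ε / 2))) σ →
        ∀ x : Torus d N, x ∉ torusBall (0 : Torus d N) ((N : ℝ) ^ (1 - ε / 2)) →
          c * (N : ℝ) ^ (-(d + 1 : ℝ)) ≤ σ x := by
  have h_loss := minAlongLoss_pos
  obtain ⟨N₀, hN₀⟩ := eventually_atTop.1
    ((eventually_eight_mul_floor_rpow_le (by linarith : 1 - ε / 2 < 1)).and (eventually_ge_atTop 3))
  refine ⟨(4096 * d * (minAlongLoss ^ (d - 1)) ^ 2)⁻¹, by positivity, N₀, fun N hN σ hσ x hx => ?_⟩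
  obtain ⟨h_radius, hN⟩ := hN₀ N hN
  have hN_pos : (0 : ℝ) < N := by exact_mod_cast (by omega : 0 < N)
  have h_one_le := hσ.one_le_mul_of_torusBall (by positivity) h_radius hN hx
  rw [Real.rpow_neg hN_pos.le, ← mul_inv, inv_le_iff_one_le_mul₀' (by positivity)]
  exact_mod_cast h_one_le

/-- **Lemma (lower bound for the quasistationary distribution).**
With `B = B(0, N^{1−ε/2})`, for all large `N`:
`inf_{x ∉ B} σ(x) ≥ c N^{−2d}`. -/
theorem qsd_lower_bound
    (d : ℕ) (hd : 3 ≤ d) (ε : ℝ) (hε : 0 < ε ∧ ε < 1) :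
    ∃ c : ℝ, 0 < c ∧ ∃ N₀ : ℕ, ∀ N : ℕ, N₀ ≤ N →
      ∀ σ : Torus d N → ℝ,
        IsQSD d N (torusBall (0 : Torus d N) ((N : ℝ) ^ (1 - ε / 2))) σ →
        ∀ x : Torus d N, x ∉ torusBall (0 : Torus d N) ((N : ℝ) ^ (1 - ε / 2)) →
          c * (N : ℝ) ^ (-(2 * (d : ℝ))) ≤ σ x := by
  obtain ⟨c, hc, N₀, h⟩ := qsd_lower_bound_general (by omega : 0 < d) hε.1
  refine ⟨c, hc, max N₀ 1, fun N hN σ hσ x hx => le_trans ?_ (h N (le_of_max_le_left hN) σ hσ x hx)⟩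
  have hN : (1 : ℝ) ≤ N := by exact_mod_cast le_of_max_le_right hN
  have hd : (3 : ℝ) ≤ d := by exact_mod_cast hd
  gcongr
  linarith

end Frag
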